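/- arXiv:1802.02566 — 3 statements merged into one kernel-verified Lean document; each statement's English description precedes it below -/
import Mathlib

section
/- Let $K$ be a field, let $l \ge 1$, and let $f, a_1, \dots, a_l \in K[[t]]$ satisfy the integral dependence relation $f^l + a_1 f^{l-1} + \cdots + a_{l-1} f + a_l = 0$. Let $n, p, q$ be positive integers and suppose that $p \cdot n \cdot i \le q \cdot \mathrm{ord}(a_i)$ for every $i = 1, \dots, l$ (inequality in $\mathbb{N} \cup \{\infty\}$). Then $p \cdot n \le q \cdot \mathrm{ord}(f)$; equivalently, $\mathrm{ord}(f)/n \ge p/q$. -/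
/-!
The order is a valuation on `K[[t]]`. If `f` had finite order `m` with `q * m < p * n`, then each
`a i * f ^ (l - (i + 1))` would have order greater than `l * m`, since
`q * (ord (a i) + (l - (i + 1)) * m) ≥ p * n * (i + 1) + q * (l - (i + 1)) * m > q * l * m`.
Hence in the dependence relation the coefficient of `t ^ (l * m)` comes from `f ^ l` alone, where
it is nonzero because `f ^ l` has order exactly `l * m`: a contradiction.
-/

/-- Let `K` be a field, `l ≥ 1`, and `f, a 1, ..., a l ∈ K[[t]]` satisfy the integral
dependence relation `f^l + a_1 f^(l-1) + ⋯ + a_(l-1) f + a_l = 0`.  If `p, n, q` are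
positive integers with `p * n * i ≤ q * ord (a i)` for all `i = 1, ..., l`
(inequality in `ℕ∞`), then `p * n ≤ q * ord f`. -/
theorem stmt0 (K : Type*) [Field K] (l : ℕ) (hl : 1 ≤ l)
    (f : PowerSeries K) (a : Fin l → PowerSeries K)
    (hdep : f ^ l + ∑ i : Fin l, a i * f ^ (l - ((i : ℕ) + 1)) = 0)
    (n p q : ℕ) (hn : 0 < n) (hp : 0 < p) (hq : 0 < q)
    (hcoef : ∀ i : Fin l, (↑(p * n * ((i : ℕ) + 1)) : ℕ∞) ≤ ↑q * (a i).order) :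
    (↑(p * n) : ℕ∞) ≤ ↑q * f.order := by
  by_contra! hlt
  have hf : f ≠ 0 := by
    rintro rfl
    simp [PowerSeries.order_zero, ENat.mul_top, hq.ne'] at hlt
  obtain ⟨m, hm⟩ : ∃ m : ℕ, f.order = m := ⟨_, (PowerSeries.coe_toNat_order hf).symm⟩
  rw [hm] at hlt
  have hqm : q * m < p * n := by exact_mod_cast hlt
  have hpow (k : ℕ) : (f ^ k).order = ((k * m : ℕ) : ℕ∞) := by
    rw [PowerSeries.order_pow, hm, nsmul_eq_mul]
    push_cast
    rfl
  have hterm (i : Fin l) :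
      PowerSeries.coeff (l * m) (a i * f ^ (l - ((i : ℕ) + 1))) = 0 := by
    apply PowerSeries.coeff_of_lt_order
    rw [PowerSeries.order_mul, hpow]
    have hi := hcoef i
    cases hr : (a i).order with
    | top =>
      rw [top_add]
      exact ENat.natCast_lt_top _
    | coe r =>
      rw [hr] at hi
      have hi' : p * n * ((i : ℕ) + 1) ≤ q * r := by exact_mod_cast hi
      have hr' : ((i : ℕ) + 1) * m < r := by
        refine lt_of_mul_lt_mul_left (a := q) ?_ q.zero_le
        calc q * (((i : ℕ) + 1) * m) = q * m * ((i : ℕ) + 1) := by ring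
          _ < p * n * ((i : ℕ) + 1) := Nat.mul_lt_mul_of_pos_right hqm (Nat.succ_pos _)
          _ ≤ q * r := hi'
      have hl' : l * m = ((i : ℕ) + 1) * m + (l - ((i : ℕ) + 1)) * m := by
        rw [← add_mul, Nat.add_sub_cancel' i.isLt]
      have : l * m < r + (l - ((i : ℕ) + 1)) * m := by omega
      exact_mod_cast this
  have hcoeff := congrArg (PowerSeries.coeff (l * m)) hdep
  rw [map_add, map_sum, Finset.sum_eq_zero (fun i _ => hterm i), add_zero, map_zero] at hcoeff
  have hne := PowerSeries.coeff_order (pow_ne_zero l hf)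
  rw [hpow, ENat.toNat_natCast] at hne
  exact hne hcoeff
end

section
/- Let $R$ be a commutative integral domain, $K$ a field, and $\varphi : R \to K[[t]]$ a ring homomorphism. Let $f_1, \dots, f_r \in R$, let $n_1, \dots, n_r$ be positive integers, and let $A$ be the $R$-subalgebra of the polynomial ring $R[W]$ generated by $f_1 W^{n_1}, \dots, f_r W^{n_r}$. Let $f \in R$ and let $n \ge 1$ be such that the element $f W^{n} \in R[W]$ is integral over $A$. Then for all positive integers $p, q$: if $p \cdot n_j \le q \cdot \mathrm{ord}(\varphi(f_j))$ for every $j = 1, \dots, r$, then $p \cdot n \le q \cdot \mathrm{ord}(\varphi(f))$. -/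
/-!
Substitute `W ↦ t⁻ᵖ` and `t ↦ t^q`: this is the ring homomorphism `R[W] → Frac K⟦t⟧` sending `a Wⁿ`
to `φ(a)(t^q) / t^(p n)`, an element of order `q * ord (φ a) - p * n`. Hence such a monomial lands
in `K⟦t⟧` exactly when `p * n ≤ q * ord (φ a)` (`order_le_iff_isIntegral`). By hypothesis the
generators of `A`, and so `A` itself, land in `K⟦t⟧`; an element integral over `A` then lands in an
element of `Frac K⟦t⟧` integral over `K⟦t⟧`, and `K⟦t⟧` is integrally closed.
-/

open Polynomial

/-- The substitution `W ↦ t⁻ᵖ`, `t ↦ t^q`, as a ring homomorphism `R[W] → Frac K⟦t⟧`. -/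
noncomputable def monomialSubst {R K : Type*} [CommRing R] [Field K] (φ : R →+* PowerSeries K)
    (p q : ℕ) (hq : q ≠ 0) : Polynomial R →+* FractionRing (PowerSeries K) :=
  eval₂RingHom
    ((algebraMap (PowerSeries K) (FractionRing (PowerSeries K))).comp
      ((PowerSeries.expand q hq : PowerSeries K →ₐ[K] PowerSeries K).toRingHom.comp φ))
    ((algebraMap (PowerSeries K) (FractionRing (PowerSeries K)) PowerSeries.X)⁻¹ ^ p)

lemma monomialSubst_C {R K : Type*} [CommRing R] [Field K] (φ : R →+* PowerSeries K)
    (p q : ℕ) (hq : q ≠ 0) (a : R) :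
    monomialSubst φ p q hq (C a) =
      algebraMap (PowerSeries K) _ (PowerSeries.expand q hq (φ a)) := by
  simp [monomialSubst]

lemma monomialSubst_C_mul_X_pow {R K : Type*} [CommRing R] [Field K] (φ : R →+* PowerSeries K)
    (p q : ℕ) (hq : q ≠ 0) (a : R) (n : ℕ) :
    monomialSubst φ p q hq (C a * X ^ n) =
      algebraMap (PowerSeries K) _ (PowerSeries.expand q hq (φ a)) /
        algebraMap (PowerSeries K) _ (PowerSeries.X ^ (p * n)) := by
  simp [monomialSubst, div_eq_mul_inv, pow_mul]

/-- The order bound on a monomial is integrality over `K⟦t⟧` of its image, because `K⟦t⟧` is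
integrally closed and the power of `t` dividing a power series is governed by its order. -/
lemma order_le_iff_isIntegral {R K : Type*} [CommRing R] [Field K] (φ : R →+* PowerSeries K)
    (p q : ℕ) (hq : q ≠ 0) (a : R) (n : ℕ) :
    (↑(p * n) : ℕ∞) ≤ ↑q * (φ a).order ↔
      IsIntegral (PowerSeries K) (monomialSubst φ p q hq (C a * X ^ n)) := by
  have hX : algebraMap (PowerSeries K) (FractionRing (PowerSeries K))
      (PowerSeries.X ^ (p * n)) ≠ 0 := by
    simp [PowerSeries.X_ne_zero]
  rw [← nsmul_eq_mul, ← PowerSeries.order_expand q hq, PowerSeries.order_eq_emultiplicity_X,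
    ← pow_dvd_iff_le_emultiplicity, IsIntegrallyClosed.isIntegral_iff,
    monomialSubst_C_mul_X_pow]
  refine exists_congr fun y => ?_
  rw [eq_div_iff hX, ← map_mul, (IsFractionRing.injective (PowerSeries K) _).eq_iff, mul_comm,
    eq_comm]

/-- Let `R` be a commutative integral domain, `K` a field, `φ : R → K[[t]]` a ring
homomorphism.  Let `f 1, ..., f r ∈ R`, with positive weights `n 1, ..., n r`, and
let `A ⊆ R[W]` be the `R`-subalgebra generated by the `f j * W ^ (n j)`.  If
`f W^n` (with `n ≥ 1`) is integral over `A`, then for all positive integers `p, q`: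
if `p * n j ≤ q * ord (φ (f j))` for every `j`, then `p * n ≤ q * ord (φ f)`. -/
theorem stmt2 (R K : Type*) [CommRing R] [IsDomain R] [Field K]
    (φ : R →+* PowerSeries K)
    (r : ℕ) (f : Fin r → R) (n : Fin r → ℕ) (hn : ∀ j, 0 < n j)
    (A : Subalgebra R (Polynomial R))
    (hA : A = Algebra.adjoin R (Set.range fun j : Fin r => (C (f j) * X ^ (n j))))
    (g : R) (m : ℕ) (hm : 1 ≤ m)
    (hint : IsIntegral A ((C g * X ^ m : Polynomial R)))
    (p q : ℕ) (hp : 0 < p) (hq : 0 < q)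
    (hgen : ∀ j : Fin r, (↑(p * n j) : ℕ∞) ≤ ↑q * (φ (f j)).order) :
    (↑(p * m) : ℕ∞) ≤ ↑q * (φ g).order := by
  have hq' : q ≠ 0 := hq.ne'
  set ev := monomialSubst φ p q hq'
  let T := integralClosure (PowerSeries K) (FractionRing (PowerSeries K))
  have hAT : ∀ a : A, ev a ∈ T := by
    rintro ⟨a, ha⟩
    change ev a ∈ T
    rw [hA] at ha
    induction ha using Algebra.adjoin_induction with
    | mem x hx =>
      obtain ⟨j, rfl⟩ := hx
      exact (order_le_iff_isIntegral φ p q hq' (f j) (n j)).1 (hgen j)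
    | algebraMap a =>
      change ev (C a) ∈ T
      rw [monomialSubst_C]
      exact T.algebraMap_mem _
    | add x y _ _ hx hy => rw [map_add]; exact T.add_mem hx hy
    | mul x y _ _ hx hy => rw [map_mul]; exact T.mul_mem hx hy
  have hT : IsIntegral T (ev (C g * X ^ m)) :=
    hint.map_of_comp_eq ((ev.comp A.val.toRingHom).codRestrict T hAT) ev rfl
  exact (order_le_iff_isIntegral φ p q hq' g m).2 (isIntegral_trans _ hT)
end

section
/- Let $R$ be a commutative ring, $K$ a field, and $\varphi : R \to K[[t]]$ a ring homomorphism. Let $f_1, \dots, f_r \in R$, let $n_1, \dots, n_r$ be positive integers, and let $A$ be the $R$-subalgebra of the polynomial ring $R[W]$ generated by $f_1 W^{n_1}, \dots, f_r W^{n_r}$. Let $p, q$ be positive integers with $p \cdot n_j \le q \cdot \mathrm{ord}(\varphi(f_j))$ for every $j = 1, \dots, r$. Then for every $P \in A$ and every $m \ge 1$, the coefficient $c_m$ of $W^m$ in $P$ satisfies $p \cdot m \le q \cdot \mathrm{ord}(\varphi(c_m))$. -/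
open Polynomial

/-!
The polynomials `P` such that every coefficient `c m` of `P` satisfies `p * m ≤ q * ord (φ (c m))`
form an `R`-subalgebra of `R[W]` (the degree-zero condition is vacuous): closure under
addition is the ultrametric inequality for `ord`, and closure under products follows from it
together with the additivity of `ord`, since the coefficient of `W^m` in `P * Q` is a sum of
products `a i * b j` with `i + j = m`. The generators lie in this subalgebra by hypothesis.
-/

theorem le_mul_order_add {K : Type*} [Field K] {a b : PowerSeries K} {c q : ℕ∞}
    (ha : c ≤ q * a.order) (hb : c ≤ q * b.order) : c ≤ q * (a + b).order := by
  refine le_trans ?_ (mul_le_mul_right (PowerSeries.min_order_le_order_add a b) q)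
  rcases min_choice a.order b.order with h | h <;> rwa [h]

theorem le_mul_order_sum {K ι : Type*} [Field K] (s : Finset ι) (g : ι → PowerSeries K)
    {c q : ℕ∞} (hq : q ≠ 0) (h : ∀ i ∈ s, c ≤ q * (g i).order) :
    c ≤ q * (∑ i ∈ s, g i).order :=
  Finset.sum_induction g (fun a => c ≤ q * a.order) (fun _ _ => le_mul_order_add)
    (by simp [ENat.mul_top hq]) h

/-- Let `R` be a commutative ring, `K` a field, `φ : R → K[[t]]` a ring homomorphism.
Let `A ⊆ R[W]` be the `R`-subalgebra generated by `f j * W ^ (n j)` with `n j ≥ 1`,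
and let `p, q ≥ 1` satisfy `p * n j ≤ q * ord (φ (f j))` for every `j`.  Then for
every `P ∈ A` and every `m ≥ 1`, the coefficient `c m` of `W^m` in `P` satisfies
`p * m ≤ q * ord (φ (c m))`. -/
theorem stmt3 (R K : Type*) [CommRing R] [Field K]
    (φ : R →+* PowerSeries K)
    (r : ℕ) (f : Fin r → R) (n : Fin r → ℕ) (hn : ∀ j, 0 < n j)
    (A : Subalgebra R (Polynomial R))
    (hA : A = Algebra.adjoin R (Set.range fun j : Fin r => (C (f j) * X ^ (n j))))
    (p q : ℕ) (hp : 0 < p) (hq : 0 < q)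
    (hgen : ∀ j : Fin r, (↑(p * n j) : ℕ∞) ≤ ↑q * (φ (f j)).order) :
    ∀ P ∈ A, ∀ m : ℕ, 1 ≤ m →
      (↑(p * m) : ℕ∞) ≤ ↑q * (φ (P.coeff m)).order := by
  have hq' : (q : ℕ∞) ≠ 0 := by exact_mod_cast hq.ne'
  intro P hP m hm
  -- The bound is proved for all `m`, including `m = 0`, so that it passes to products.
  clear hm
  subst hA
  induction hP using Algebra.adjoin_induction generalizing m with
  | mem P hP =>
    obtain ⟨j, rfl⟩ := hP
    by_cases h : m = n j
    · subst h
      simpa using hgen j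
    · simp [coeff_C_mul, coeff_X_pow, h, ENat.mul_top hq']
  | algebraMap a =>
    by_cases h : m = 0
    · simp [h]
    · simp [coeff_C, h, ENat.mul_top hq']
  | add P Q _ _ hP hQ =>
    rw [coeff_add, map_add]
    exact le_mul_order_add (hP m) (hQ m)
  | mul P Q _ _ hP hQ =>
    rw [coeff_mul, map_sum]
    refine le_mul_order_sum _ _ hq' fun x hx => ?_
    rw [← Finset.HasAntidiagonal.mem_antidiagonal.mp hx, map_mul, PowerSeries.order_mul, mul_add, mul_add,
      Nat.cast_add]
    exact add_le_add (hP x.1) (hQ x.2)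
end
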